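/- arXiv:2308.16146 — 3 statements merged into one kernel-verified Lean document; each statement's English description precedes it below -/
import Mathlib

section
/- For every orthogonal matrix Q ∈ O(2), the largest absolute value of an entry in the first column of Q equals the largest absolute value over all entries of Q, and ρ^{GEPP}(Q) = ρ^{GECP}(Q) = 1/‖Q‖_max², where ‖Q‖_max = max_{i,j} |Q_{ij}|. -/
open Matrix Filter

/-- Gaussian-elimination intermediate entry `A^{(k+1)}_{ij}` (0-indexed step `k`):
the Schur complement of the leading `k × k` block. -/
noncomputable def geEntry {n : ℕ} (A : Matrix (Fin n) (Fin n) ℝ) (k i j : Fin n) : ℝ :=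
  A i j - ∑ a : Fin k.val, ∑ b : Fin k.val,
    A i (Fin.castLE k.isLt.le a) *
      (A.submatrix (Fin.castLE k.isLt.le) (Fin.castLE k.isLt.le))⁻¹ a b *
      A (Fin.castLE k.isLt.le b) j

/-- `A` is PP: at each GE step the pivot dominates its column. -/
def IsPP {n : ℕ} (A : Matrix (Fin n) (Fin n) ℝ) : Prop :=
  ∀ k i : Fin n, k ≤ i → |geEntry A k i k| ≤ |geEntry A k k k|

/-- `A` is CP: at each GE step the pivot dominates the whole untriangularized block. -/
def IsCP {n : ℕ} (A : Matrix (Fin n) (Fin n) ℝ) : Prop :=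
  ∀ k i j : Fin n, k ≤ i → k ≤ j → |geEntry A k i j| ≤ |geEntry A k k k|

/-- Maximal absolute Gaussian-elimination intermediate entry of `A`. -/
noncomputable def maxGE {n : ℕ} (A : Matrix (Fin n) (Fin n) ℝ) : ℝ :=
  ⨆ k : Fin n, ⨆ i : {i : Fin n // k ≤ i}, ⨆ j : {j : Fin n // k ≤ j},
    |geEntry A k i.1 j.1|

/-- `max_{i,j} |A_{ij}|`. -/
noncomputable def maxAbs {n : ℕ} (A : Matrix (Fin n) (Fin n) ℝ) : ℝ :=
  ⨆ i, ⨆ j, |A i j|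

/-- Growth factor `ρ(A)`. -/
noncomputable def growth {n : ℕ} (A : Matrix (Fin n) (Fin n) ℝ) : ℝ :=
  maxGE A / maxAbs A

/-- `P` is a permutation matrix. -/
def IsPermMatrix {n : ℕ} (P : Matrix (Fin n) (Fin n) ℝ) : Prop :=
  ∃ σ : Equiv.Perm (Fin n), P = σ.permMatrix ℝ

/-- `D` is a diagonal matrix with diagonal entries `±1`. -/
def IsSignDiag {n : ℕ} (D : Matrix (Fin n) (Fin n) ℝ) : Prop :=
  (∀ i j, i ≠ j → D i j = 0) ∧ (∀ i, D i i = 1 ∨ D i i = -1)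

/-- Wilkinson's unipotent lower triangular matrix `L_n`. -/
def Lmat (n : ℕ) : Matrix (Fin n) (Fin n) ℝ :=
  fun i j => if i = j then 1 else if j < i then -1 else 0

/-- Wilkinson's upper triangular factor `U_n`. -/
def Umat (n : ℕ) : Matrix (Fin n) (Fin n) ℝ :=
  fun i j => if (j : ℕ) = n - 1 then 2 ^ (i : ℕ) else if i = j then 1 else 0

/-- Wilkinson's worst-case GEPP growth matrix `A_n`. -/
def Amat (n : ℕ) : Matrix (Fin n) (Fin n) ℝ :=
  fun i j =>
    if (j : ℕ) = n - 1 ∧ (i : ℕ) < n - 1 then 1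
    else if i = j then 1
    else if j < i then -1
    else 0

/-- `α_j = 1 + (2/3)(4^{j-1} - 1)` (1-indexed `j`). -/
noncomputable def alpha (j : ℕ) : ℝ := 1 + 2 / 3 * (4 ^ (j - 1) - 1)

/-- The unnormalized orthogonal factor `Q̂` (columns of `Qhat n` are, 1-indexed,
the columns described in the paper; here 0-indexed). -/
noncomputable def Qhat (n : ℕ) : Matrix (Fin n) (Fin n) ℝ :=
  fun i j =>
    if (j : ℕ) = n - 1 then
      if (i : ℕ) = n - 1 then 1 else 2 ^ (n - 2 - (i : ℕ))
    else if (j : ℕ) = n - 2 then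
      if (i : ℕ) = n - 2 then 1 else if (i : ℕ) = n - 1 then -1 else 0
    else if (i : ℕ) < (j : ℕ) then
      -((n : ℝ) - (j : ℕ) - 2) * 2 ^ ((j : ℕ) - (i : ℕ) - 1)
    else if (i : ℕ) = (j : ℕ) then
      ((n : ℝ) - (j : ℕ) - 1) * (alpha ((j : ℕ) + 1) - 1) + 1
    else -alpha ((j : ℕ) + 1)

/-- The diagonal normalization matrix `D̂`. -/
noncomputable def Dhat (n : ℕ) : Matrix (Fin n) (Fin n) ℝ :=
  Matrix.diagonal fun j =>
    if (j : ℕ) = 0 then (n : ℝ)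
    else if (j : ℕ) = n - 2 then 2
    else if (j : ℕ) = n - 1 then 2 * alpha (n - 1)
    else ((n : ℝ) - (j : ℕ) - 1) ^ 2 * (alpha ((j : ℕ) + 1) - 1) ^ 2 *
        (2 * alpha ((j : ℕ) + 1) - 1) / (2 * alpha ((j : ℕ) + 1) - 2) +
      ((n : ℝ) - (j : ℕ) - 1) * (alpha ((j : ℕ) + 1) ^ 2 + alpha ((j : ℕ) + 1) - 1) +
      2 * alpha (j : ℕ)

/-- `Q_n = Q̂ D̂^{-1/2}`, the orthogonal QR factor of `L_n`. -/
noncomputable def Qmat (n : ℕ) : Matrix (Fin n) (Fin n) ℝ :=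
  Qhat n * Matrix.diagonal fun m => (Real.sqrt (Dhat n m m))⁻¹

/-- Frobenius norm. -/
noncomputable def frobNorm {n : ℕ} (M : Matrix (Fin n) (Fin n) ℝ) : ℝ :=
  Real.sqrt (∑ i, ∑ j, M i j ^ 2)

/-- The Givens rotation `G(θ, i, j)`. -/
noncomputable def givens (n : ℕ) (θ : ℝ) (i j : Fin n) : Matrix (Fin n) (Fin n) ℝ :=
  fun a b =>
    if a = i ∧ b = i then Real.cos θ
    else if a = j ∧ b = j then Real.cos θ
    else if a = i ∧ b = j then -Real.sin θ
    else if a = j ∧ b = i then Real.sin θ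
    else if a = b then 1 else 0

/-- The ordered product of Givens rotations `Q(θ) = ∏_{i=1}^{n-1} ∏_{j=i+1}^n G(θ_{ij}, i, j)`. -/
noncomputable def QofTheta (n : ℕ) (θ : Fin n → Fin n → ℝ) : Matrix (Fin n) (Fin n) ℝ :=
  ((List.finRange n).map fun i =>
    (((List.finRange n).filter fun j => decide (i < j)).map fun j =>
      givens n (θ i j) i j).prod).prod

/-!
Since `adjugate A = det A • Aᵀ` for an orthogonal `A ∈ O(2)`, the two columns of `A` have the same
absolute entries in opposite order. So both columns have the same largest absolute entry, and a
partially pivoted `A` has `|A 0 0| = ‖A‖_max`. The only entry which elimination creates is the last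
pivot `det A / A 0 0`, of absolute value `1 / ‖A‖_max ≥ 1 ≥ ‖A‖_max`. Hence it is the largest
intermediate entry, and dividing by `‖A‖_max` gives the growth factor. Complete pivoting implies
partial pivoting, so it needs no separate argument.
-/

section MaxAbs

variable {n : ℕ} [NeZero n]

theorem maxAbs_le_iff {A : Matrix (Fin n) (Fin n) ℝ} {c : ℝ} :
    maxAbs A ≤ c ↔ ∀ i j, |A i j| ≤ c := by
  simp only [maxAbs, ciSup_le_iff (Set.finite_range _).bddAbove]

theorem abs_apply_le_maxAbs (A : Matrix (Fin n) (Fin n) ℝ) (i j : Fin n) : |A i j| ≤ maxAbs A :=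
  maxAbs_le_iff.1 le_rfl i j

theorem maxGE_le_iff {A : Matrix (Fin n) (Fin n) ℝ} {c : ℝ} :
    maxGE A ≤ c ↔ ∀ k i j, k ≤ i → k ≤ j → |geEntry A k i j| ≤ c := by
  have (k : Fin n) : Nonempty {i : Fin n // k ≤ i} := ⟨⟨k, le_rfl⟩⟩
  simp only [maxGE, ciSup_le_iff (Set.finite_range _).bddAbove, Subtype.forall]
  exact forall_congr' fun k ↦ forall_congr' fun i ↦ forall_comm

end MaxAbs

section Elimination

theorem geEntry_zero {n : ℕ} [NeZero n] (A : Matrix (Fin n) (Fin n) ℝ) (i j : Fin n) :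
    geEntry A 0 i j = A i j := by
  have : IsEmpty (Fin ((0 : Fin n) : ℕ)) := by
    rw [Fin.val_zero]
    exact Fin.isEmpty
  rw [geEntry, Finset.univ_eq_empty, Finset.sum_empty, sub_zero]

theorem geEntry_one {n : ℕ} (A : Matrix (Fin (n + 2)) (Fin (n + 2)) ℝ) (i j : Fin (n + 2)) :
    geEntry A 1 i j = A i j - A i 0 * (A 0 0)⁻¹ * A 0 j := by
  have hn : 1 < n + 2 := by lia
  change A i j - ∑ a : Fin 1, ∑ b : Fin 1, A i (Fin.castLE hn.le a) *
    (A.submatrix (Fin.castLE hn.le) (Fin.castLE hn.le))⁻¹ a b * A (Fin.castLE hn.le b) j = _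
  simp [inv_subsingleton]

theorem geEntry_one_one_one {A : Matrix (Fin 2) (Fin 2) ℝ} (h : A 0 0 ≠ 0) :
    geEntry A 1 1 1 = A.det / A 0 0 := by
  rw [geEntry_one, det_fin_two]
  field

theorem maxGE_fin_two (A : Matrix (Fin 2) (Fin 2) ℝ) :
    maxGE A = max (maxAbs A) |geEntry A 1 1 1| := by
  refine eq_of_forall_ge_iff fun c ↦ ?_
  simp [maxGE_le_iff, maxAbs_le_iff, Fin.forall_fin_two, geEntry_zero]

end Elimination

section Pivoting

variable {n : ℕ} {A : Matrix (Fin n) (Fin n) ℝ}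

theorem IsCP.isPP (hA : IsCP A) : IsPP A := fun k i hki ↦ hA k i k hki le_rfl

theorem IsPP.abs_apply_le [NeZero n] (hA : IsPP A) (i : Fin n) : |A i 0| ≤ |A 0 0| := by
  simpa only [geEntry_zero] using hA 0 i (Fin.zero_le i)

theorem IsPP.iSup_abs_apply [NeZero n] (hA : IsPP A) : ⨆ i, |A i 0| = |A 0 0| :=
  le_antisymm (ciSup_le hA.abs_apply_le)
    (le_ciSup (f := fun i ↦ |A i 0|) (Set.finite_range _).bddAbove 0)

theorem IsPP.apply_zero_zero_ne_zero [NeZero n] (hA : IsPP A) (hdet : A.det ≠ 0) : A 0 0 ≠ 0 := by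
  intro h
  refine hdet (det_eq_zero_of_column_eq_zero 0 fun i ↦ ?_)
  simpa [h] using hA.abs_apply_le i

end Pivoting

section Permutation

variable {n : ℕ} {P : Matrix (Fin n) (Fin n) ℝ}

theorem IsPermMatrix.one : IsPermMatrix (1 : Matrix (Fin n) (Fin n) ℝ) :=
  ⟨1, permMatrix_one.symm⟩

theorem IsPermMatrix.mem_orthogonalGroup (hP : IsPermMatrix P) :
    P ∈ orthogonalGroup (Fin n) ℝ := by
  obtain ⟨σ, rfl⟩ := hP
  rw [mem_orthogonalGroup_iff, transpose_permMatrix, ← permMatrix_mul, inv_mul_cancel,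
    permMatrix_one]

theorem IsPermMatrix.maxAbs_mul (hP : IsPermMatrix P) (A : Matrix (Fin n) (Fin n) ℝ) :
    maxAbs (P * A) = maxAbs A := by
  obtain ⟨σ, rfl⟩ := hP
  rw [Equiv.Perm.permMatrix, PEquiv.toMatrix_toPEquiv_mul]
  exact σ.iSup_comp (g := fun i ↦ ⨆ j, |A i j|)

theorem IsPermMatrix.maxAbs_mul_right (hP : IsPermMatrix P) (A : Matrix (Fin n) (Fin n) ℝ) :
    maxAbs (A * P) = maxAbs A := by
  obtain ⟨σ, rfl⟩ := hP
  rw [Equiv.Perm.permMatrix, PEquiv.mul_toMatrix_toPEquiv]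
  exact iSup_congr fun i ↦ σ.symm.iSup_comp (g := fun j ↦ |A i j|)

end Permutation

section Orthogonal

theorem abs_det_of_mem_orthogonalGroup {ι : Type*} [Fintype ι] [DecidableEq ι]
    {A : Matrix ι ι ℝ} (hA : A ∈ orthogonalGroup ι ℝ) : |A.det| = 1 :=
  CStarRing.norm_of_mem_unitary (det_of_mem_unitary hA)

theorem adjugate_of_mem_orthogonalGroup {ι R : Type*} [Fintype ι] [DecidableEq ι] [CommRing R]
    {A : Matrix ι ι R} (hA : A ∈ orthogonalGroup ι R) : adjugate A = A.det • Aᵀ := by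
  calc adjugate A = adjugate A * (A * Aᵀ) := by rw [(mem_orthogonalGroup_iff ι R).1 hA, mul_one]
    _ = A.det • Aᵀ := by rw [← mul_assoc, adjugate_mul, smul_mul_assoc, one_mul]

variable {A : Matrix (Fin 2) (Fin 2) ℝ}

theorem abs_apply_rev_rev_of_mem_orthogonalGroup (hA : A ∈ orthogonalGroup (Fin 2) ℝ)
    (i j : Fin 2) : |A i.rev j.rev| = |A i j| := by
  have h : |adjugate A j i| = |A i j| := by
    simp [adjugate_of_mem_orthogonalGroup hA, abs_mul, abs_det_of_mem_orthogonalGroup hA]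
  rw [← h, adjugate_fin_two]
  fin_cases i <;> fin_cases j <;> simp

theorem iSup_abs_apply_of_mem_orthogonalGroup (hA : A ∈ orthogonalGroup (Fin 2) ℝ) (j : Fin 2) :
    ⨆ i, |A i j| = maxAbs A := by
  have hcol (i : Fin 2) : |A i j| ≤ ⨆ i, |A i j| :=
    le_ciSup (f := fun i ↦ |A i j|) (Set.finite_range _).bddAbove i
  refine le_antisymm (ciSup_le fun i ↦ abs_apply_le_maxAbs A i j) (maxAbs_le_iff.2 fun i k ↦ ?_)
  obtain rfl | rfl : k = j ∨ k = j.rev := by fin_cases j <;> fin_cases k <;> simp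
  · exact hcol i
  · calc |A i j.rev| = |A i.rev j| := by
          rw [← abs_apply_rev_rev_of_mem_orthogonalGroup hA, Fin.rev_rev]
      _ ≤ ⨆ i, |A i j| := hcol i.rev

theorem IsPP.growth_of_mem_orthogonalGroup (hPP : IsPP A) (hA : A ∈ orthogonalGroup (Fin 2) ℝ) :
    growth A = 1 / maxAbs A ^ 2 := by
  have hdet : |A.det| = 1 := abs_det_of_mem_orthogonalGroup hA
  have hpivot : A 0 0 ≠ 0 := hPP.apply_zero_zero_ne_zero (by simp [← abs_pos, hdet])
  have hmax : maxAbs A = |A 0 0| := by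
    rw [← iSup_abs_apply_of_mem_orthogonalGroup hA 0, hPP.iSup_abs_apply]
  have hpos : 0 < maxAbs A := hmax ▸ abs_pos.2 hpivot
  have hle : maxAbs A ≤ 1 := maxAbs_le_iff.2 (entry_norm_bound_of_unitary hA)
  have hlast : |geEntry A 1 1 1| = 1 / maxAbs A := by
    rw [geEntry_one_one_one hpivot, abs_div, hdet, hmax]
  have hmaxGE : maxGE A = 1 / maxAbs A := by
    rw [maxGE_fin_two, hlast]
    exact max_eq_right (hle.trans (one_le_one_div hpos hle))
  rw [growth, hmaxGE, div_div, sq]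

end Orthogonal

theorem orth_two_gepp_eq_gecp_general {Q : Matrix (Fin 2) (Fin 2) ℝ}
    (hQ : Q ∈ orthogonalGroup (Fin 2) ℝ) :
    (∀ j, ⨆ i, |Q i j| = maxAbs Q) ∧
    ∀ P R : Matrix (Fin 2) (Fin 2) ℝ, IsPermMatrix P → IsPermMatrix R →
      IsPP (P * Q * R) → growth (P * Q * R) = 1 / maxAbs Q ^ 2 := by
  refine ⟨iSup_abs_apply_of_mem_orthogonalGroup hQ, fun P R hP hR hPP ↦ ?_⟩
  have hmem : P * Q * R ∈ orthogonalGroup (Fin 2) ℝ :=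
    mul_mem (mul_mem hP.mem_orthogonalGroup hQ) hR.mem_orthogonalGroup
  rw [hPP.growth_of_mem_orthogonalGroup hmem, hR.maxAbs_mul_right, hP.maxAbs_mul]

/-- for `Q ∈ O(2)`, the largest absolute entry of the first column of `Q` equals
`‖Q‖_max`, and `ρ^GEPP(Q) = ρ^GECP(Q) = 1/‖Q‖_max²`. -/
theorem orth_two_gepp_eq_gecp (Q : Matrix (Fin 2) (Fin 2) ℝ) (hQ : Qᵀ * Q = 1) :
    (⨆ i : Fin 2, |Q i 0|) = maxAbs Q ∧
    (∀ P : Matrix (Fin 2) (Fin 2) ℝ, IsPermMatrix P → IsPP (P * Q) →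
      growth (P * Q) = 1 / maxAbs Q ^ 2) ∧
    (∀ P R : Matrix (Fin 2) (Fin 2) ℝ, IsPermMatrix P → IsPermMatrix R →
      IsCP (P * Q * R) → growth (P * Q * R) = 1 / maxAbs Q ^ 2) := by
  obtain ⟨hcol, hgrowth⟩ := orth_two_gepp_eq_gecp_general ((mem_orthogonalGroup_iff' _ _).2 hQ)
  exact ⟨hcol 0, fun P hP hPP ↦ by simpa using hgrowth P 1 hP .one (by simpa using hPP),
    fun P R hP hR hCP ↦ hgrowth P R hP hR hCP.isPP⟩
end

section
/- For every n ≥ 3, the matrix Q̂ satisfies Q̂ᵀ Q̂ = D̂; that is, the columns of Q̂ are pairwise orthogonal and the squared Euclidean norm of column j of Q̂ equals D̂_{jj}, where D̂_{11} = n, D̂_{n−1,n−1} = 2, D̂_{nn} = 2α_{n−1}, and D̂_{jj} = (n−j)²(α_j − 1)²·(2α_j − 1)/(2α_j − 2) + (n−j)(α_j² + α_j − 1) + 2α_{j−1} for 2 ≤ j ≤ n−2. -/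
open Matrix Filter

/-!
Up to a scalar (different from `1` only in column `n - 2`, counting from `0`), column `j` of `Q̂`
has one and the same shape in terms of the number `m` of rows below the diagonal. It equals
`-α_{j+1}` below the diagonal, and above it every entry is the sum of all entries underneath, so
going up the entries double: the column is orthogonal to the columns `0, …, j - 1` of Wilkinson's
`L_n`. Moreover, `α_{j+1}` is the sum of the entries `i ≤ j` weighted by `2 ^ (j - i)`, which says
that the column lies in the span of the columns `0, …, j` of `L_n`.

For `j < k`, column `k` is proportional to the weights `2 ^ (j - i)` on the rows `i ≤ j`, with
factor its entry `b` in row `j`, so these rows contribute `b * α_{j+1}` to the inner product with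
column `j`. On the rows below, column `j` is constant and column `k` sums to `b`, so they
contribute `-α_{j+1} * b`.
-/

open Finset

theorem sum_range_mul_eq_zero_of_head_of_tail {R : Type*} [CommRing R] {u v w : ℕ → R} {a b : R}
    {l n : ℕ} (hln : l ≤ n)
    (hu_head : ∑ i ∈ range l, w i * u i = a) (hu_tail : ∀ i ∈ Ico l n, u i = -a)
    (hv_head : ∀ i ∈ range l, v i = w i * b) (hv_tail : ∑ i ∈ Ico l n, v i = b) :
    ∑ i ∈ range n, u i * v i = 0 := by
  have head : ∑ i ∈ range l, u i * v i = a * b := by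
    rw [← hu_head, sum_mul]
    exact sum_congr rfl fun i hi => by rw [hv_head i hi]; ring
  have tail : ∑ i ∈ Ico l n, u i * v i = -a * b := by
    rw [← hv_tail, mul_sum]
    exact sum_congr rfl fun i hi => by rw [hu_tail i hi]
  rw [← sum_range_add_sum_Ico _ hln, head, tail, neg_mul, add_neg_cancel]

theorem alpha_one : alpha 1 = 1 := by
  simp [alpha]

theorem alpha_add_two (j : ℕ) : alpha (j + 2) = 4 * alpha (j + 1) - 1 := by
  simp only [alpha, Nat.add_sub_cancel, show j + 2 - 1 = j + 1 by lia, pow_succ]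
  ring

theorem one_le_alpha_succ (j : ℕ) : 1 ≤ alpha (j + 1) := by
  induction j with
  | zero => exact alpha_one.ge
  | succ j ih => linarith [alpha_add_two j]

theorem one_lt_alpha_add_two (j : ℕ) : 1 < alpha (j + 2) := by
  linarith [alpha_add_two j, one_le_alpha_succ j]

theorem alpha_succ_ne_zero (j : ℕ) : alpha (j + 1) ≠ 0 :=
  (zero_lt_one.trans_le (one_le_alpha_succ j)).ne'

theorem sum_two_pow_mul_two_pow_pred_eq_alpha_sub_one (j : ℕ) :
    ∑ i ∈ range j, (2 : ℝ) ^ (j - i) * 2 ^ (j - i - 1) = alpha (j + 1) - 1 := by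
  induction j with
  | zero => simp [alpha_one]
  | succ j ih =>
    rw [sum_range_succ']
    simp only [Nat.add_sub_add_right, ih, alpha_add_two, Nat.sub_zero, Nat.add_sub_cancel]
    simp only [alpha, Nat.add_sub_cancel, pow_succ, show (4 : ℝ) = 2 * 2 by norm_num, mul_pow]
    ring

/-- Entry `i` of column `j` (both counted from `0`) of `Q̂`, before rescaling, when there are `m`
rows below the diagonal. -/
noncomputable def unscaledColumn (m : ℝ) (j i : ℕ) : ℝ :=
  if i < j then -(m - 1) * 2 ^ (j - i - 1)
  else if i = j then m * (alpha (j + 1) - 1) + 1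
  else -alpha (j + 1)

section UnscaledColumn

variable {m : ℝ} {i j k : ℕ}

theorem unscaledColumn_of_lt (h : i < j) :
    unscaledColumn m j i = -(m - 1) * 2 ^ (j - i - 1) :=
  if_pos h

theorem unscaledColumn_self : unscaledColumn m j j = m * (alpha (j + 1) - 1) + 1 := by
  simp [unscaledColumn]

theorem unscaledColumn_of_gt (h : j < i) : unscaledColumn m j i = -alpha (j + 1) := by
  rw [unscaledColumn, if_neg h.not_gt, if_neg h.ne']

theorem unscaledColumn_eq_two_pow_mul (hij : i ≤ j) (hjk : j < k) :
    unscaledColumn m k i = 2 ^ (j - i) * unscaledColumn m k j := by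
  rw [unscaledColumn_of_lt (hij.trans_lt hjk), unscaledColumn_of_lt hjk,
    show k - i - 1 = (j - i) + (k - j - 1) by lia, pow_add]
  ring

theorem sum_two_pow_mul_unscaledColumn (m : ℝ) (j : ℕ) :
    ∑ i ∈ range (j + 1), 2 ^ (j - i) * unscaledColumn m j i = alpha (j + 1) := by
  have above : ∑ i ∈ range j, 2 ^ (j - i) * unscaledColumn m j i =
      -(m - 1) * (alpha (j + 1) - 1) := by
    rw [← sum_two_pow_mul_two_pow_pred_eq_alpha_sub_one, mul_sum]
    refine sum_congr rfl fun i hi => ?_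
    rw [unscaledColumn_of_lt (mem_range.mp hi)]
    ring
  rw [sum_range_succ, above, unscaledColumn_self, Nat.sub_self]
  ring

theorem sum_Ico_unscaledColumn_below (m : ℝ) (j l : ℕ) :
    ∑ i ∈ Ico (j + 1) (j + 1 + l), unscaledColumn m j i = -l * alpha (j + 1) := by
  rw [sum_congr rfl fun i hi => unscaledColumn_of_gt (mem_Ico.mp hi).1]
  simp

theorem sum_Ico_unscaledColumn (m : ℕ) (hij : i ≤ j) :
    ∑ r ∈ Ico i (j + 1 + m), unscaledColumn m j r = -(m - 1) * 2 ^ (j - i) := by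
  induction hij using Nat.decreasingInduction with
  | self =>
    rw [sum_eq_sum_Ico_succ_bot (by lia), sum_Ico_unscaledColumn_below, unscaledColumn_self,
      Nat.sub_self]
    ring
  | of_succ i hij ih =>
    rw [sum_eq_sum_Ico_succ_bot (by lia), ih, unscaledColumn_of_lt hij,
      show j - i = (j - (i + 1)) + 1 by lia, Nat.add_sub_cancel_right, Nat.sub_add_eq, pow_succ]
    ring

theorem sum_Ico_succ_unscaledColumn (m : ℕ) (hij : i < j) :
    ∑ r ∈ Ico (i + 1) (j + 1 + m), unscaledColumn m j r = unscaledColumn m j i := by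
  rw [sum_Ico_unscaledColumn m (by lia : i + 1 ≤ j), unscaledColumn_of_lt hij, Nat.sub_add_eq]

theorem sum_unscaledColumn_mul_of_lt (m' : ℝ) (m : ℕ) (hjk : j < k) :
    ∑ i ∈ range (k + 1 + m), unscaledColumn m' j i * unscaledColumn m k i = 0 :=
  sum_range_mul_eq_zero_of_head_of_tail (by lia : j + 1 ≤ k + 1 + m)
    (sum_two_pow_mul_unscaledColumn m' j)
    (fun _ hi => unscaledColumn_of_gt (mem_Ico.mp hi).1)
    (fun _ hi => unscaledColumn_eq_two_pow_mul (mem_range_succ_iff.mp hi) hjk)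
    (sum_Ico_succ_unscaledColumn m hjk)

/-- The squared Euclidean norm of `unscaledColumn m j` on its `j + 1 + m` rows. -/
noncomputable def unscaledNormSq (m : ℝ) (j : ℕ) : ℝ :=
  (m - 1) ^ 2 * (alpha (j + 1) - 1) / 2 + (m * (alpha (j + 1) - 1) + 1) ^ 2 +
    m * alpha (j + 1) ^ 2

theorem sum_unscaledColumn_mul_self (m j : ℕ) :
    ∑ i ∈ range (j + 1 + m), unscaledColumn m j i * unscaledColumn m j i =
      unscaledNormSq m j := by
  have above : ∑ i ∈ range j, unscaledColumn m j i * unscaledColumn m j i =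
      ((m : ℝ) - 1) ^ 2 / 2 * (alpha (j + 1) - 1) := by
    rw [← sum_two_pow_mul_two_pow_pred_eq_alpha_sub_one, mul_sum]
    refine sum_congr rfl fun i hi => ?_
    have hij := mem_range.mp hi
    rw [unscaledColumn_of_lt hij, ← mul_pow_sub_one (by lia : j - i ≠ 0) (2 : ℝ)]
    ring
  have below : ∑ i ∈ Ico (j + 1) (j + 1 + m), unscaledColumn m j i * unscaledColumn m j i =
      m * alpha (j + 1) ^ 2 := by
    rw [sum_congr rfl fun i hi => by rw [unscaledColumn_of_gt (mem_Ico.mp hi).1]]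
    simp [sq]
  rw [← sum_range_add_sum_Ico _ (by lia : j + 1 ≤ j + 1 + m), sum_range_succ, above, below,
    unscaledColumn_self, unscaledNormSq]
  ring

end UnscaledColumn

/-- The matrix with columns `unscaledColumn`; `j.rev` is the number of rows below row `j`. -/
noncomputable def unscaledQhat (n : ℕ) : Matrix (Fin n) (Fin n) ℝ :=
  Matrix.of fun i j => unscaledColumn (j.rev : ℕ) j i

theorem unscaledQhat_transpose_mul_self_apply_of_lt {n : ℕ} {j k : Fin n} (hjk : j < k) :
    ((unscaledQhat n)ᵀ * unscaledQhat n) j k = 0 := by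
  have hn : k + 1 + k.rev = n := by rw [Fin.val_rev]; lia
  have h := sum_unscaledColumn_mul_of_lt (j.rev : ℕ) (k.rev : ℕ) hjk
  rwa [hn, ← Fin.sum_univ_eq_sum_range] at h

theorem unscaledQhat_transpose_mul_self (n : ℕ) :
    (unscaledQhat n)ᵀ * unscaledQhat n =
      diagonal fun j : Fin n => unscaledNormSq (j.rev : ℕ) j := by
  ext j k
  rcases lt_trichotomy j k with hjk | rfl | hkj
  · rw [unscaledQhat_transpose_mul_self_apply_of_lt hjk, diagonal_apply_ne _ hjk.ne]
  · have hn : j + 1 + j.rev = n := by rw [Fin.val_rev]; lia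
    have h := sum_unscaledColumn_mul_self j.rev j
    rw [hn, ← Fin.sum_univ_eq_sum_range] at h
    rwa [diagonal_apply_eq]
  · rw [← (isSymm_transpose_mul_self (unscaledQhat n)).apply,
      unscaledQhat_transpose_mul_self_apply_of_lt hkj, diagonal_apply_ne _ hkj.ne']

/-- The factor that turns `unscaledColumn m j` into a column of `Q̂`. With one row below the
diagonal, the unscaled column is `α_{j+1} (e_j - e_{j+1})`, whereas that of `Q̂` is
`e_j - e_{j+1}`. -/
noncomputable def columnScale (m j : ℕ) : ℝ :=
  if m = 1 then (alpha (j + 1))⁻¹ else 1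

theorem columnScale_of_ne_one {m : ℕ} (hm : m ≠ 1) (j : ℕ) : columnScale m j = 1 :=
  if_neg hm

theorem columnScale_one (j : ℕ) : columnScale 1 j = (alpha (j + 1))⁻¹ :=
  if_pos rfl

theorem columnScale_zero_right (m : ℕ) : columnScale m 0 = 1 := by
  simp [columnScale, alpha_one]

theorem natCast_val_rev {n : ℕ} (j : Fin n) : ((j.rev : ℕ) : ℝ) = n - j - 1 := by
  rw [Fin.val_rev, Nat.cast_sub j.is_lt, Nat.cast_add_one, sub_sub]

theorem Qhat_apply_of_rev_eq_zero {n : ℕ} (i : Fin n) {j : Fin n} (hj : (j.rev : ℕ) = 0) :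
    Qhat n i j = unscaledColumn 0 j i := by
  have hn : n = j + 1 := by rw [Fin.val_rev] at hj; lia
  rw [Qhat, if_pos (by lia)]
  rcases (show (i : ℕ) ≤ j by lia).lt_or_eq with hij | hij
  · rw [if_neg (by lia), unscaledColumn_of_lt hij, show n - 2 - i = j - i - 1 by lia]
    ring
  · rw [if_pos (by lia), hij, unscaledColumn_self]
    ring

theorem Qhat_apply_of_rev_eq_one {n : ℕ} (i : Fin n) {j : Fin n} (hj : (j.rev : ℕ) = 1) :
    Qhat n i j = unscaledColumn 1 j i * (alpha (j + 1))⁻¹ := by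
  have hn : n = j + 2 := by rw [Fin.val_rev] at hj; lia
  have hα := alpha_succ_ne_zero j
  rw [Qhat, if_neg (by lia), if_pos (by lia)]
  rcases lt_trichotomy (i : ℕ) j with hij | hij | hij
  · rw [if_neg (by lia), if_neg (by lia), unscaledColumn_of_lt hij]
    ring
  · rw [if_pos (by lia), hij, unscaledColumn_self, one_mul, sub_add_cancel, mul_inv_cancel₀ hα]
  · rw [if_neg (by lia), if_pos (by lia), unscaledColumn_of_gt hij, neg_mul, mul_inv_cancel₀ hα]

theorem Qhat_apply_of_two_le_rev {n : ℕ} (i : Fin n) {j : Fin n} (hj : 2 ≤ (j.rev : ℕ)) :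
    Qhat n i j = unscaledColumn (j.rev : ℕ) j i := by
  rw [natCast_val_rev, Qhat, unscaledColumn]
  rw [Fin.val_rev] at hj
  rw [if_neg (by lia), if_neg (by lia), show (n : ℝ) - j - 1 - 1 = n - j - 2 by ring]

theorem Qhat_apply (n : ℕ) (i j : Fin n) :
    Qhat n i j = unscaledColumn (j.rev : ℕ) j i * columnScale j.rev j := by
  obtain hj | hj | hj : (j.rev : ℕ) = 0 ∨ (j.rev : ℕ) = 1 ∨ 2 ≤ (j.rev : ℕ) := by lia
  · rw [Qhat_apply_of_rev_eq_zero i hj, hj, columnScale_of_ne_one zero_ne_one, Nat.cast_zero,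
      mul_one]
  · rw [Qhat_apply_of_rev_eq_one i hj, hj, columnScale_one, Nat.cast_one]
  · rw [Qhat_apply_of_two_le_rev i hj, columnScale_of_ne_one (by lia), mul_one]

theorem Qhat_eq_unscaledQhat_mul_diagonal (n : ℕ) :
    Qhat n = unscaledQhat n * diagonal fun j : Fin n => columnScale j.rev j := by
  ext i j
  rw [mul_diagonal, Qhat_apply, unscaledQhat, of_apply]

theorem unscaledNormSq_zero_right (m : ℝ) : unscaledNormSq m 0 = m + 1 := by
  rw [unscaledNormSq, zero_add, alpha_one]
  ring

theorem unscaledNormSq_one_left (j : ℕ) : unscaledNormSq 1 j = 2 * alpha (j + 1) ^ 2 := by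
  rw [unscaledNormSq]
  ring

theorem unscaledNormSq_succ (m : ℝ) (j : ℕ) :
    unscaledNormSq m (j + 1) =
      m ^ 2 * (alpha (j + 2) - 1) ^ 2 * (2 * alpha (j + 2) - 1) / (2 * alpha (j + 2) - 2) +
        m * (alpha (j + 2) ^ 2 + alpha (j + 2) - 1) + 2 * alpha (j + 1) := by
  have hα : alpha (j + 2) - 1 ≠ 0 := sub_ne_zero.mpr (one_lt_alpha_add_two j).ne'
  rw [unscaledNormSq, show 2 * alpha (j + 2) - 2 = 2 * (alpha (j + 2) - 1) by ring,
    show alpha (j + 1) = (alpha (j + 2) + 1) / 4 by linarith [alpha_add_two j]]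
  field_simp [hα]
  ring

theorem Dhat_apply_self (n : ℕ) (j : Fin n) :
    Dhat n j j = columnScale j.rev j ^ 2 * unscaledNormSq (j.rev : ℕ) j := by
  have hrev := Fin.val_rev j
  rw [Dhat, diagonal_apply_eq]
  rcases hj : (j : ℕ) with _ | l
  · rw [if_pos rfl, columnScale_zero_right, unscaledNormSq_zero_right, natCast_val_rev, hj]
    simp
  rw [if_neg l.succ_ne_zero]
  by_cases h_one : (j.rev : ℕ) = 1
  · have hα := alpha_succ_ne_zero (l + 1)
    rw [if_pos (by lia), h_one, columnScale_one, Nat.cast_one, unscaledNormSq_one_left]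
    field_simp [hα]
  rw [if_neg (by lia), columnScale_of_ne_one h_one, unscaledNormSq_succ, one_pow, one_mul]
  split_ifs with h_last
  · have h_zero : (j.rev : ℕ) = 0 := by lia
    rw [h_zero, ← h_last]
    simp
  · rw [natCast_val_rev, hj]

theorem Dhat_eq_diagonal (n : ℕ) :
    Dhat n = diagonal fun j : Fin n =>
      columnScale j.rev j ^ 2 * unscaledNormSq (j.rev : ℕ) j := by
  simp_rw [← Dhat_apply_self, Dhat, diagonal_apply_eq]

/-- for `n ≥ 3`, `Q̂ᵀ Q̂ = D̂`: the columns of `Q̂` are pairwise orthogonal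
and the squared norm of column `j` equals `D̂_{jj}`. -/
theorem Qhat_columns_orthogonal (n : ℕ) (hn : 3 ≤ n) :
    (Qhat n)ᵀ * Qhat n = Dhat n := by
  rw [Qhat_eq_unscaledQhat_mul_diagonal, transpose_mul, diagonal_transpose, Matrix.mul_assoc,
    ← Matrix.mul_assoc (unscaledQhat n)ᵀ, unscaledQhat_transpose_mul_self, diagonal_mul_diagonal,
    diagonal_mul_diagonal, Dhat_eq_diagonal]
  congr with j
  ring
end

section
/- For every n ≥ 3, the final Gaussian-elimination pivot of Q̂ equals 2α_{n−1}; that is, det(Q̂) / det(Q̂_{1:n−1,1:n−1}) = 2α_{n−1}, equivalently the (n,n) Gaussian-elimination intermediate entry Q̂^{(n)}_{nn} = 2α_{n−1}. -/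
open Matrix Filter

/-!
If `v ᵥ* A = c eₙᵀ` and `vₙ = 1`, then `det A` is `c` times the leading principal minor of order
`n - 1`, because that minor is the last diagonal entry of the adjugate. The columns of `Q̂` are
orthogonal, so its last column, whose last entry is `1`, is such a `v`, with `c = 2 α_{n-1}` its
squared norm.

The minor does not vanish because `det Q̂ ≠ 0`: as `Q̂` is, up to column scaling, the orthogonal
factor of `L`, the matrix `Lᵀ Q̂` is lower triangular with positive diagonal. Its triangularity says
that each entry of `Q̂` above the diagonal is the sum of the entries below it in its column, which
also evaluates part of the inner product of two columns.
-/

section LeadingMinor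

variable {R : Type*} [CommRing R] {n : ℕ}

/-- The leading principal minor of order `k`: the determinant of the leading `k × k` block. -/
def leadingMinor (A : Matrix (Fin n) (Fin n) R) (k : ℕ) (hk : k ≤ n) : R :=
  (A.submatrix (Fin.castLE hk) (Fin.castLE hk)).det

theorem leadingMinor_self (A : Matrix (Fin n) (Fin n) R) : leadingMinor A n le_rfl = A.det := by
  rw [leadingMinor, Fin.castLE_rfl, submatrix_id_id]

theorem last_mul_det_eq_mul_leadingMinor {A : Matrix (Fin (n + 1)) (Fin (n + 1)) R}
    {v : Fin (n + 1) → R} {c : R} (hv : v ᵥ* A = Pi.single (Fin.last n) c) :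
    v (Fin.last n) * A.det = c * leadingMinor A n n.le_succ := by
  have adjugate_last : A.adjugate (Fin.last n) (Fin.last n) = leadingMinor A n n.le_succ := by
    rw [adjugate_fin_succ_eq_det_submatrix, Fin.succAbove_last, Even.neg_one_pow ⟨_, rfl⟩, one_mul]
    rfl
  calc v (Fin.last n) * A.det
      = (v ᵥ* A ᵥ* A.adjugate) (Fin.last n) := by
        rw [vecMul_vecMul, mul_adjugate, vecMul_smul, vecMul_one, Pi.smul_apply, smul_eq_mul,
          mul_comm]
    _ = c * leadingMinor A n n.le_succ := by
        rw [hv, single_vecMul, Pi.smul_apply, row_apply, smul_eq_mul, adjugate_last]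

end LeadingMinor

theorem geEntry_self_eq_leadingMinor_div {n : ℕ} (A : Matrix (Fin n) (Fin n) ℝ) (k : Fin n)
    (hk : leadingMinor A k k.isLt.le ≠ 0) :
    geEntry A k k k = leadingMinor A (k + 1) k.isLt / leadingMinor A k k.isLt.le := by
  set ι : Fin k → Fin n := Fin.castLE k.isLt.le
  set κ : Fin 1 → Fin n := fun _ ↦ k
  have blocks : (A.submatrix (Fin.castLE k.isLt) (Fin.castLE k.isLt)).submatrix
        finSumFinEquiv finSumFinEquiv =
      fromBlocks (A.submatrix ι ι) (A.submatrix ι κ) (A.submatrix κ ι) (A.submatrix κ κ) := by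
    have left (a : Fin k) : Fin.castLE k.isLt (Fin.castAdd 1 a) = ι a := rfl
    have right (a : Fin 1) : Fin.castLE k.isLt (Fin.natAdd k a) = κ a := by
      ext; simp [κ]
    ext (a | a) (b | b) <;> simp [left, right]
  have := invertibleOfIsUnitDet (A.submatrix ι ι) hk.isUnit
  have schur : (A.submatrix κ κ - A.submatrix κ ι * ⅟(A.submatrix ι ι) * A.submatrix ι κ) 0 0 =
      geEntry A k k k := by
    simp only [geEntry, invOf_eq_nonsing_inv, Matrix.sub_apply, Matrix.mul_apply, submatrix_apply,
      Finset.sum_mul]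
    rw [Finset.sum_comm]
  rw [eq_div_iff hk, mul_comm, eq_comm, leadingMinor, ← det_submatrix_equiv_self finSumFinEquiv,
    blocks, det_fromBlocks₁₁, det_fin_one, schur, leadingMinor]

theorem geEntry_last_eq_det_div {n : ℕ} (A : Matrix (Fin (n + 1)) (Fin (n + 1)) ℝ)
    (hA : leadingMinor A n n.le_succ ≠ 0) :
    geEntry A (Fin.last n) (Fin.last n) (Fin.last n) = A.det / leadingMinor A n n.le_succ := by
  rw [← leadingMinor_self]
  exact geEntry_self_eq_leadingMinor_div A (Fin.last n) hA

theorem Lmat_transpose_mul_apply {n : ℕ} {ι : Type*} (M : Matrix (Fin n) ι ℝ) (i : Fin n)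
    (j : ι) : ((Lmat n)ᵀ * M) i j = M i j - ∑ k ∈ Finset.Ioi i, M k j := by
  have entry (k : Fin n) : (Lmat n)ᵀ i k * M k j =
      (if k = i then M k j else 0) - if k ∈ Finset.Ioi i then M k j else 0 := by
    rcases lt_trichotomy i k with h | rfl | h
    · simp [Lmat, h, h.ne']
    · simp [Lmat]
    · simp [Lmat, h.ne, h.not_gt]
  rw [Matrix.mul_apply, Finset.sum_congr rfl fun k _ ↦ entry k, Finset.sum_sub_distrib,
    Finset.sum_ite_eq' Finset.univ i, if_pos (Finset.mem_univ i), Finset.sum_ite_mem,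
    Finset.univ_inter]

theorem one_le_alpha (j : ℕ) : 1 ≤ alpha j := by
  have : (1 : ℝ) ≤ 4 ^ (j - 1) := one_le_pow₀ (by norm_num)
  unfold alpha
  linarith

theorem alpha_pos (j : ℕ) : 0 < alpha j :=
  one_pos.trans_le (one_le_alpha j)

theorem two_mul_sum_four_pow_eq_alpha_sub_one (j : ℕ) :
    2 * ∑ i ∈ Finset.range j, (4 : ℝ) ^ (j - 1 - i) = alpha (j + 1) - 1 := by
  rw [Finset.sum_range_reflect (fun i ↦ (4 : ℝ) ^ i) j, geom_sum_eq (by norm_num), alpha,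
    Nat.add_sub_cancel]
  ring

/-- The entry, in 0-indexed row `i` and column `j`, of `Q̂` with column `n - 2` multiplied by
`α_{n-1}`. After this rescaling the last two columns obey the same formula as the others, with
`n - j - 2` equal to `0` and `-1`; this factor is therefore a subtraction in `ℝ`, not in `ℕ`. -/
noncomputable def scaledQhatEntry (n i j : ℕ) : ℝ :=
  if i < j then -((n : ℝ) - j - 2) * 2 ^ (j - i - 1)
  else if i = j then ((n : ℝ) - j - 1) * (alpha (j + 1) - 1) + 1
  else -alpha (j + 1)

section ScaledQhat

variable {n i j : ℕ}

theorem scaledQhatEntry_of_lt (h : i < j) :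
    scaledQhatEntry n i j = -((n : ℝ) - j - 2) * 2 ^ (j - i - 1) :=
  if_pos h

theorem scaledQhatEntry_self :
    scaledQhatEntry n j j = ((n : ℝ) - j - 1) * (alpha (j + 1) - 1) + 1 := by
  simp [scaledQhatEntry]

theorem scaledQhatEntry_of_gt (h : j < i) : scaledQhatEntry n i j = -alpha (j + 1) := by
  simp [scaledQhatEntry, h.not_gt, h.ne']

theorem scaledQhatEntry_last_of_lt (h : i < n) :
    scaledQhatEntry (n + 1) i n = 2 ^ (n - 1 - i) := by
  rw [scaledQhatEntry_of_lt h, Nat.sub_right_comm]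
  push_cast
  ring

theorem scaledQhatEntry_last_last : scaledQhatEntry (n + 1) n n = 1 := by
  rw [scaledQhatEntry_self]
  push_cast
  ring

theorem sum_scaledQhatEntry_below_diagonal (hj : j < n) :
    ∑ k ∈ Finset.Ico (j + 1) n, scaledQhatEntry n k j = -((n : ℝ) - j - 1) * alpha (j + 1) := by
  have below_diagonal : ∀ k ∈ Finset.Ico (j + 1) n, scaledQhatEntry n k j = -alpha (j + 1) :=
    fun k hk ↦ scaledQhatEntry_of_gt (Finset.mem_Ico.1 hk).1
  rw [Finset.sum_congr rfl below_diagonal, Finset.sum_const, Nat.card_Ico, nsmul_eq_mul,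
    Nat.cast_sub hj]
  push_cast
  ring

theorem sum_scaledQhatEntry_Ico (hij : i ≤ j) (hj : j < n) :
    ∑ k ∈ Finset.Ico i n, scaledQhatEntry n k j = -((n : ℝ) - j - 2) * 2 ^ (j - i) := by
  induction hij using Nat.decreasingInduction with
  | self =>
    rw [Finset.sum_eq_sum_Ico_succ_bot hj, scaledQhatEntry_self,
      sum_scaledQhatEntry_below_diagonal hj, Nat.sub_self]
    ring
  | of_succ i hij ih =>
    rw [Finset.sum_eq_sum_Ico_succ_bot (hij.trans hj), ih, scaledQhatEntry_of_lt hij,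
      show j - i = (j - (i + 1)) + 1 by lia, Nat.add_sub_cancel, Nat.sub_add_eq]
    ring

theorem scaledQhatEntry_eq_sum_of_lt (hij : i < j) (hj : j < n) :
    scaledQhatEntry n i j = ∑ k ∈ Finset.Ico (i + 1) n, scaledQhatEntry n k j := by
  rw [sum_scaledQhatEntry_Ico hij hj, scaledQhatEntry_of_lt hij, Nat.succ_eq_add_one,
    Nat.sub_add_eq]

theorem scaledQhatEntry_last_mul_of_lt (hij : i < j) (hj : j < n) :
    scaledQhatEntry (n + 1) i n * scaledQhatEntry (n + 1) i j =
      2 ^ (n - 1 - j) * (-((n : ℝ) - j - 1)) * (2 * 4 ^ (j - 1 - i)) := by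
  obtain ⟨d, rfl⟩ := Nat.exists_eq_add_of_lt hij
  obtain ⟨p, rfl⟩ := Nat.exists_eq_add_of_lt hj
  have four_pow : (4 : ℝ) ^ d = 2 ^ d * 2 ^ d := by rw [← mul_pow]; norm_num
  rw [scaledQhatEntry_last_of_lt (hij.trans hj), scaledQhatEntry_of_lt hij]
  simp only [show i + d + 1 + p + 1 - 1 - i = p + d + 1 by lia, show i + d + 1 - i - 1 = d by lia,
    show i + d + 1 + p + 1 - 1 - (i + d + 1) = p by lia, show i + d + 1 - 1 - i = d by lia,
    four_pow]
  push_cast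
  ring

theorem sum_scaledQhatEntry_last_mul_eq_zero (hj : j < n) :
    ∑ i ∈ Finset.range (n + 1), scaledQhatEntry (n + 1) i n * scaledQhatEntry (n + 1) i j = 0 := by
  have above : ∑ i ∈ Finset.range j, scaledQhatEntry (n + 1) i n * scaledQhatEntry (n + 1) i j =
      2 ^ (n - 1 - j) * (-((n : ℝ) - j - 1)) * (alpha (j + 1) - 1) := by
    rw [Finset.sum_congr rfl fun i hi ↦
      scaledQhatEntry_last_mul_of_lt (Finset.mem_range.1 hi) hj, ← Finset.mul_sum,
      ← Finset.mul_sum, two_mul_sum_four_pow_eq_alpha_sub_one]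
  have below : ∑ i ∈ Finset.Ico (j + 1) (n + 1),
      scaledQhatEntry (n + 1) i n * scaledQhatEntry (n + 1) i j =
        2 ^ (n - 1 - j) * (-alpha (j + 1)) := by
    rw [Finset.sum_congr rfl fun i hi ↦ congrArg (_ * ·)
      (scaledQhatEntry_of_gt (Finset.mem_Ico.1 hi).1), ← Finset.sum_mul,
      ← scaledQhatEntry_eq_sum_of_lt hj n.lt_succ_self, scaledQhatEntry_last_of_lt hj]
  rw [← Finset.sum_range_add_sum_Ico _ (Nat.le_succ_of_le hj.le),
    Finset.sum_eq_sum_Ico_succ_bot (Nat.lt_succ_of_lt hj), above, below,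
    scaledQhatEntry_last_of_lt hj, scaledQhatEntry_self]
  push_cast
  ring

theorem sum_scaledQhatEntry_last_sq (hn : n ≠ 0) :
    ∑ i ∈ Finset.range (n + 1), scaledQhatEntry (n + 1) i n ^ 2 = 2 * alpha n := by
  have square : ∀ i ∈ Finset.range n, scaledQhatEntry (n + 1) i n ^ 2 = 4 ^ (n - 1 - i) := by
    intro i hi
    rw [scaledQhatEntry_last_of_lt (Finset.mem_range.1 hi), pow_right_comm]
    norm_num
  have four_pow : (4 : ℝ) ^ n = 4 * 4 ^ (n - 1) := (mul_pow_sub_one hn 4).symm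
  have two_mul_sum := two_mul_sum_four_pow_eq_alpha_sub_one n
  rw [alpha, Nat.add_sub_cancel, four_pow] at two_mul_sum
  rw [Finset.sum_range_succ, scaledQhatEntry_last_last, Finset.sum_congr rfl square, alpha]
  linarith

end ScaledQhat

/-- `Q̂` with column `n - 2` multiplied by `α_{n-1}`, as a matrix; see `scaledQhatEntry`. -/
noncomputable def scaledQhat (n : ℕ) : Matrix (Fin n) (Fin n) ℝ :=
  Matrix.of fun i j ↦ scaledQhatEntry n i j

/-- The column factors that turn `scaledQhat` back into `Qhat`. -/
noncomputable def qhatScale (n : ℕ) (j : Fin n) : ℝ :=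
  if (j : ℕ) = n - 2 then (alpha (n - 1))⁻¹ else 1

theorem Qhat_eq_scaledQhat_mul_diagonal {n : ℕ} (hn : 2 ≤ n) :
    Qhat n = scaledQhat n * diagonal (qhatScale n) := by
  obtain ⟨n, rfl⟩ := Nat.exists_eq_add_of_le' hn
  ext i j
  rw [mul_diagonal, scaledQhat, of_apply, qhatScale, Qhat]
  rcases (by lia : (j : ℕ) = n + 1 ∨ (j : ℕ) = n ∨ (j : ℕ) < n) with hj | hj | hj
  · rcases (by lia : (i : ℕ) < n + 1 ∨ (i : ℕ) = n + 1) with hi | hi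
    · simp [hj, hi.ne, scaledQhatEntry_last_of_lt hi]
    · simp [hj, hi, scaledQhatEntry_last_last]
  · have alpha_ne_zero : alpha (n + 1) ≠ 0 := (alpha_pos _).ne'
    rcases (by lia : (i : ℕ) < n ∨ (i : ℕ) = n ∨ (i : ℕ) = n + 1) with hi | hi | hi
    · simp [hj, hi.ne, scaledQhatEntry_of_lt hi, show (i : ℕ) ≠ n + 1 by lia]
    · have entry_eq_alpha : scaledQhatEntry (n + 2) n n = alpha (n + 1) := by
        rw [scaledQhatEntry_self]
        push_cast
        ring
      simp [hj, hi, entry_eq_alpha, alpha_ne_zero]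
    · simp [hj, hi, scaledQhatEntry_of_gt, alpha_ne_zero]
  · simp [scaledQhatEntry, hj.ne, show (j : ℕ) ≠ n + 1 by lia]

theorem Lmat_transpose_mul_scaledQhat_apply {n : ℕ} (i j : Fin n) :
    ((Lmat n)ᵀ * scaledQhat n) i j =
      scaledQhatEntry n i j - ∑ k ∈ Finset.Ico (i + 1 : ℕ) n, scaledQhatEntry n k j := by
  have : Finset.Ico (i + 1 : ℕ) n = (Finset.Ioi i).map Fin.valEmbedding := by
    rw [Fin.map_valEmbedding_Ioi]
    rfl
  rw [Lmat_transpose_mul_apply, this, Finset.sum_map]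
  rfl

theorem det_scaledQhat_ne_zero (n : ℕ) : (scaledQhat n).det ≠ 0 := by
  have lower_triangular : ((Lmat n)ᵀ * scaledQhat n).IsLowerTriangular := by
    intro i j hij
    rw [Lmat_transpose_mul_scaledQhat_apply, sub_eq_zero]
    exact scaledQhatEntry_eq_sum_of_lt hij j.isLt
  have diagonal_pos (j : Fin n) : 0 < ((Lmat n)ᵀ * scaledQhat n) j j := by
    have hα := one_le_alpha (j + 1)
    have hj : (0 : ℝ) ≤ n - j - 1 := by
      have : ((j + 1 : ℕ) : ℝ) ≤ n := by exact_mod_cast j.isLt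
      push_cast at this
      linarith
    rw [Lmat_transpose_mul_scaledQhat_apply, sum_scaledQhatEntry_below_diagonal j.isLt,
      scaledQhatEntry_self,
      show ((n : ℝ) - j - 1) * (alpha (j + 1) - 1) + 1 - -((n : ℝ) - j - 1) * alpha (j + 1) =
        ((n : ℝ) - j - 1) * (2 * alpha (j + 1) - 1) + 1 by ring]
    exact add_pos_of_nonneg_of_pos (mul_nonneg hj (by linarith)) one_pos
  have det_ne_zero : ((Lmat n)ᵀ * scaledQhat n).det ≠ 0 := by
    rw [det_of_isLowerTriangular _ lower_triangular]
    exact Finset.prod_ne_zero_iff.2 fun j _ ↦ (diagonal_pos j).ne'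
  rw [det_mul] at det_ne_zero
  exact right_ne_zero_of_mul det_ne_zero

theorem det_Qhat_ne_zero {n : ℕ} (hn : 2 ≤ n) : (Qhat n).det ≠ 0 := by
  have scale_ne_zero (j : Fin n) : qhatScale n j ≠ 0 := by
    rw [qhatScale]
    split_ifs
    exacts [inv_ne_zero (alpha_pos _).ne', one_ne_zero]
  rw [Qhat_eq_scaledQhat_mul_diagonal hn, det_mul, det_diagonal]
  exact mul_ne_zero (det_scaledQhat_ne_zero n) (Finset.prod_ne_zero_iff.2 fun j _ ↦ scale_ne_zero j)

theorem lastCol_vecMul_scaledQhat {n : ℕ} (hn : n ≠ 0) :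
    (scaledQhat (n + 1)).col (Fin.last n) ᵥ* scaledQhat (n + 1) =
      Pi.single (Fin.last n) (2 * alpha n) := by
  ext j
  have inner_eq_sum : ((scaledQhat (n + 1)).col (Fin.last n) ᵥ* scaledQhat (n + 1)) j =
      ∑ i ∈ Finset.range (n + 1), scaledQhatEntry (n + 1) i n * scaledQhatEntry (n + 1) i j :=
    Fin.sum_univ_eq_sum_range
      (fun i ↦ scaledQhatEntry (n + 1) i n * scaledQhatEntry (n + 1) i j) (n + 1)
  rw [inner_eq_sum]
  rcases Fin.eq_castSucc_or_eq_last j with ⟨j, rfl⟩ | rfl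
  · rw [Pi.single_eq_of_ne j.castSucc_lt_last.ne]
    exact sum_scaledQhatEntry_last_mul_eq_zero j.isLt
  · simp only [Pi.single_eq_same, Fin.val_last, ← sq, sum_scaledQhatEntry_last_sq hn]

theorem det_Qhat_eq_mul_leadingMinor {n : ℕ} (hn : n ≠ 0) :
    (Qhat (n + 1)).det = 2 * alpha n * leadingMinor (Qhat (n + 1)) n n.le_succ := by
  have scale_last : qhatScale (n + 1) (Fin.last n) = 1 := if_neg (by simp; lia)
  have lastCol_last : (scaledQhat (n + 1)).col (Fin.last n) (Fin.last n) = 1 :=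
    scaledQhatEntry_last_last
  have vecMul_Qhat : (scaledQhat (n + 1)).col (Fin.last n) ᵥ* Qhat (n + 1) =
      Pi.single (Fin.last n) (2 * alpha n) := by
    rw [Qhat_eq_scaledQhat_mul_diagonal (by lia), ← vecMul_vecMul, lastCol_vecMul_scaledQhat hn,
      single_vecMul_diagonal, scale_last, mul_one]
  rw [← last_mul_det_eq_mul_leadingMinor vecMul_Qhat, lastCol_last, one_mul]

/-- for `n ≥ 3`, the final GE pivot of `Q̂` equals `2α_{n-1}`:
`det Q̂ / det Q̂_{1:n-1,1:n-1} = 2α_{n-1}`, equivalently `Q̂^{(n)}_{nn} = 2α_{n-1}`. -/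
theorem Qhat_final_pivot (n : ℕ) (hn : 3 ≤ n) :
    (Qhat n).det /
      ((Qhat n).submatrix (Fin.castLE (by omega : n - 1 ≤ n))
        (Fin.castLE (by omega : n - 1 ≤ n))).det = 2 * alpha (n - 1) ∧
    geEntry (Qhat n) ⟨n - 1, by omega⟩ ⟨n - 1, by omega⟩ ⟨n - 1, by omega⟩ =
      2 * alpha (n - 1) := by
  obtain ⟨n, rfl⟩ : ∃ m, n = m + 1 := ⟨n - 1, by lia⟩
  have det_eq := det_Qhat_eq_mul_leadingMinor (n := n) (by lia)
  have minor_ne_zero : leadingMinor (Qhat (n + 1)) n n.le_succ ≠ 0 :=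
    right_ne_zero_of_mul (det_eq ▸ det_Qhat_ne_zero (by lia))
  have pivot_eq : (Qhat (n + 1)).det / leadingMinor (Qhat (n + 1)) n n.le_succ = 2 * alpha n :=
    (div_eq_iff minor_ne_zero).2 det_eq
  exact ⟨pivot_eq, (geEntry_last_eq_det_div _ minor_ne_zero).trans pivot_eq⟩
end
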